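/- Let G₁ be an r₁-regular graph on n₁ vertices and m₁ edges, let p,q ≥ 1 be integers, let G₂ = K_{p,q}, and let α ∈ [0,1]. (1) If r₁ = 1, then the A_α-spectrum of the R-edge join G₁⟨e⟩G₂ consists precisely of: 3α − 1; α(1+p) repeated q−1 times; α(1+q) repeated p−1 times; and the four roots of F(x) = (x² − (2α+αp+αq+α+1)x + α²p + α²q + 6α + αp + αq − 2)·(x² − (2α+αp+αq)x + α² + α²p + α²q + 2αpq − pq) − (1−α)²(x−α−1)(px + qx − αp − αq − αp² − αq² − 2αpq + 2pq). (2) If r₁ ≥ 2, then the A_α-spectrum of G₁⟨e⟩G₂ consists precisely of: α(2+p+q) repeated m₁−n₁ times; α(m₁+p) repeated q−1 times; α(m₁+q) repeated p−1 times; the two roots of G_i(x) = x² − (2α+αr₁+αp+αq+λ_i(A_α(G₁)))x + α²r₁p + α²r₁q + 3αr₁ − r₁ + (3α+αp+αq−1)λ_i(A_α(G₁)) for each i = 2,…,n₁; and the four roots of F(x) = (x² − (2α+αr₁+αp+αq+r₁)x + α²r₁p + α²r₁q + 6αr₁ + αr₁p + αr₁q − 2r₁)·(x² − (2αm₁+αp+αq)x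 + α²m₁² + α²m₁p + α²m₁q + 2αpq − pq) − m₁(1−α)²(x−αr₁−r₁)(px + qx − αm₁p − αm₁q − αp² − αq² − 2αpq + 2pq). -/

import Mathlib

open Matrix Polynomial
open scoped Classical

noncomputable section

/-- `A_α(G) = α·D(G) + (1-α)·A(G)`, where `D(G)` is the diagonal degree matrix and
`A(G)` the adjacency matrix. -/
def Aalpha {V : Type*} [Fintype V] (G : SimpleGraph V) (α : ℝ) : Matrix V V ℝ :=
  α • Matrix.diagonal (fun v => (G.degree v : ℝ)) + (1 - α) • G.adjMatrix ℝ

/-- The `R`-edge join `G₁⟨e⟩G₂`: take the `R`-graph `R(G₁)` (for each edge of `G₁` a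
new vertex joined to both of its endpoints) together with `G₂`, and join every inserted
vertex of `R(G₁)` with every vertex of `G₂`. -/
def rEdgeJoin {V₁ V₂ : Type*} (G₁ : SimpleGraph V₁) (G₂ : SimpleGraph V₂) :
    SimpleGraph (V₁ ⊕ (↥G₁.edgeSet ⊕ V₂)) :=
  SimpleGraph.fromRel fun a b =>
    match a, b with
    | Sum.inl v, Sum.inl w => G₁.Adj v w
    | Sum.inl v, Sum.inr (Sum.inl e) => v ∈ (e : Sym2 V₁)
    | Sum.inr (Sum.inl _), Sum.inr (Sum.inr _) => True
    | Sum.inr (Sum.inr u), Sum.inr (Sum.inr w) => G₂.Adj u w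
    | _, _ => False

/-!
List the inserted vertices last. Their diagonal block in the characteristic matrix is scalar, so a
Schur complement over `ℝ[X]` eliminates them. What remains on `V(G₁) ⊕ V(G₂)` is block diagonal up
to blocks with constant entries, because every inserted vertex is adjacent to two vertices of `G₁`
and to all of `G₂`. The block of `V(G₁)` is a polynomial in `A_α(G₁)`, as `B Bᵀ = D + A` for the
vertex-edge incidence matrix `B`. Since `G₁` is regular, the constant blocks only meet the
eigenvector `1` of that block, and their effect on `G₂` is governed by the vector that the
characteristic matrix of `G₂` maps to a constant one, which for `K_{p,q}` is explicit. No inverse is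
ever formed: each elimination is a determinant identity between polynomials, multiplied through by
its pivot, and the monic pivots are cancelled at the end.
-/

section Determinant

variable {R m n : Type*} [CommRing R] [Fintype m] [DecidableEq m] [Fintype n] [DecidableEq n]

theorem det_fromBlocks_smul_one_mul_pow (A : Matrix m m R) (B : Matrix m n R) (C : Matrix n m R)
    (t : R) :
    (fromBlocks A B C (t • 1)).det * t ^ Fintype.card m =
      t ^ Fintype.card n * (t • A - B * C).det := by
  have h : fromBlocks A B C (t • 1) * fromBlocks (t • 1) 0 (-C) 1 =
      fromBlocks (t • A - B * C) B 0 (t • 1) := by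
    simp [fromBlocks_multiply, sub_eq_add_neg]
  simpa [mul_comm] using congrArg det h

theorem det_smul_one_sub_mul_comm (A : Matrix m n R) (B : Matrix n m R) (t : R) :
    (t • 1 - B * A).det * t ^ Fintype.card m = t ^ Fintype.card n * (t • 1 - A * B).det := by
  rw [← det_fromBlocks_one₁₁, det_fromBlocks_smul_one_mul_pow]

theorem det_fromBlocks_const_mul_pow {M : Matrix m m R} {w : m → R} {y : R}
    (hM : M *ᵥ w = fun _ => y) (N : Matrix n n R) (b c : R) :
    (fromBlocks M (of fun _ _ => b) (of fun _ _ => c) N).det * y ^ Fintype.card n =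
      M.det * (y • N - of fun _ _ => c * b * ∑ i, w i).det := by
  have hMw : M * of (fun i _ => b * w i) = (of fun _ _ => b * y : Matrix m n R) := by
    ext i j
    rw [of_apply, ← congrFun hM i]
    simp [mul_apply, mulVec, dotProduct, Finset.mul_sum, mul_left_comm]
  have h : fromBlocks M (of fun _ _ => b) (of fun _ _ => c) N *
      fromBlocks 1 (-of fun i _ => b * w i) 0 (y • 1) =
      fromBlocks M 0 (of fun _ _ => c) (y • N - of fun _ _ => c * b * ∑ i, w i) := by
    rw [fromBlocks_multiply, Matrix.mul_neg, hMw]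
    congr 1
    · simp
    · ext i j
      simp [mul_comm]
    · simp
    · ext i j
      simp [mul_apply, ← Finset.mul_sum, mul_assoc, sub_eq_neg_add]
  simpa using congrArg det h

theorem det_sub_const_mul {M : Matrix m m R} {w : m → R} {y : R} (hM : M *ᵥ w = fun _ => y)
    (k : R) : (M - of fun _ _ => k).det * y = M.det * (y - k * ∑ i, w i) := by
  have h := det_fromBlocks_const_mul_pow hM (1 : Matrix Unit Unit R) k 1
  rw [det_fromBlocks_one₂₂] at h
  convert h using 2
  · congr 2
    ext i j
    simp [mul_apply]
  · simp
  · simp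

theorem det_smul_one_sub_const (a k : R) :
    (a • (1 : Matrix m m R) - of fun _ _ => k).det =
      a ^ Fintype.card m - Fintype.card m * k * a ^ (Fintype.card m - 1) := by
  have h := congrArg (eval a) (charpoly_vecMulVec (fun _ : m => k) (fun _ => 1))
  rw [eval_charpoly] at h
  convert h using 2
  · ext i j
    simp [vecMulVec_apply, one_apply, diagonal_apply]
  · simp [dotProduct]

theorem det_fromBlocks_smul_one_const [IsDomain R] [Nonempty m] [Nonempty n] {u : R} (hu : u ≠ 0)
    (v b : R) :
    (fromBlocks (u • (1 : Matrix m m R)) (of fun _ _ => b) (of fun _ _ => b)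
      (v • (1 : Matrix n n R))).det =
      u ^ (Fintype.card m - 1) * v ^ (Fintype.card n - 1) *
        (u * v - b ^ 2 * Fintype.card m * Fintype.card n) := by
  have hM : (u • (1 : Matrix m m R)) *ᵥ 1 = fun _ => u := by
    ext
    simp [smul_mulVec]
  have h := det_fromBlocks_const_mul_pow hM (v • (1 : Matrix n n R)) b b
  rw [smul_smul, det_smul_one_sub_const, det_smul, det_one] at h
  obtain ⟨p, hp⟩ : ∃ p, Fintype.card m = p + 1 := Nat.exists_eq_succ_of_ne_zero Fintype.card_ne_zero
  obtain ⟨q, hq⟩ : ∃ q, Fintype.card n = q + 1 := Nat.exists_eq_succ_of_ne_zero Fintype.card_ne_zero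
  refine mul_right_cancel₀ (pow_ne_zero (Fintype.card n) hu) (h.trans ?_)
  simp only [Pi.one_apply, Finset.sum_const, Finset.card_univ, hp, hq, Nat.add_sub_cancel,
    nsmul_eq_mul, mul_one, Nat.cast_add, Nat.cast_one]
  ring

theorem fromBlocks_smul_one_const_mulVec (u v b : R) :
    fromBlocks (u • (1 : Matrix m m R)) (of fun _ _ => b) (of fun _ _ => b)
      (v • (1 : Matrix n n R)) *ᵥ
        Sum.elim (fun _ => v - b * Fintype.card n) (fun _ => u - b * Fintype.card m) =
      fun _ => u * v - b ^ 2 * Fintype.card m * Fintype.card n := by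
  ext (i | i) <;>
  · simp only [mulVec, dotProduct, Fintype.sum_sum_type, fromBlocks_apply₁₁, fromBlocks_apply₁₂,
      fromBlocks_apply₂₁, fromBlocks_apply₂₂, Matrix.smul_apply, one_apply, of_apply, Sum.elim_inl,
      Sum.elim_inr, smul_eq_mul, mul_ite, mul_one, mul_zero, ite_mul, zero_mul, Finset.sum_ite_eq,
      Finset.mem_univ, if_true, Finset.sum_const, Finset.card_univ, nsmul_eq_mul]
    ring

end Determinant

theorem det_smul_one_sub_smul {K m : Type*} [Field K] [Fintype m] [DecidableEq m]
    {M : Matrix m m K} {μ : m → K} (hM : M.charpoly = ∏ i, (X - C (μ i))) (a b : K) :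
    (a • (1 : Matrix m m K) - b • M).det = ∏ i, (a - b * μ i) := by
  rcases eq_or_ne b 0 with rfl | hb
  · simp
  have h : a • (1 : Matrix m m K) - b • M = b • (scalar m (a / b) - M) := by
    rw [smul_sub, scalar_apply, ← smul_one_eq_diagonal, smul_smul, mul_div_cancel₀ _ hb]
  rw [h, det_smul, ← eval_charpoly, hM, eval_prod, ← Finset.card_univ, ← Finset.prod_const,
    ← Finset.prod_mul_distrib]
  refine Finset.prod_congr rfl fun i _ => ?_
  rw [eval_sub, eval_X, eval_C, mul_sub, mul_div_cancel₀ _ hb]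

theorem det_smul_one_sub_smul_map_C {K m : Type*} [Field K] [Infinite K] [Fintype m]
    [DecidableEq m] {M : Matrix m m K} {μ : m → K} (hM : M.charpoly = ∏ i, (X - C (μ i)))
    (a b : K[X]) : (a • (1 : Matrix m m K[X]) - b • M.map C).det = ∏ i, (a - b * C (μ i)) := by
  refine Polynomial.funext fun x => ?_
  have h : (evalRingHom x).mapMatrix (a • (1 : Matrix m m K[X]) - b • M.map C) =
      a.eval x • 1 - b.eval x • M := by
    ext i j
    simp [one_apply, apply_ite (eval x)]
  rw [← coe_evalRingHom, RingHom.map_det, h, det_smul_one_sub_smul hM, coe_evalRingHom, eval_prod]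
  simp

section Incidence

/-- The vertex-edge incidence matrix with columns indexed by the edges of `G`, whereas the columns
of `SimpleGraph.incMatrix` range over all of `Sym2 V`. -/
def edgeIncMatrix (R : Type*) [Zero R] [One R] {V : Type*} (G : SimpleGraph V) :
    Matrix V G.edgeSet R :=
  of fun v e => if v ∈ (e : Sym2 V) then 1 else 0

variable (R : Type*) [Semiring R] {V : Type*} (G : SimpleGraph V)

theorem edgeIncMatrix_eq_submatrix [DecidableEq V] :
    edgeIncMatrix R G = (G.incMatrix R).submatrix id (↑) := by
  ext v e
  simp [edgeIncMatrix, SimpleGraph.incMatrix_apply', SimpleGraph.incidenceSet, e.2]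

variable [Fintype V]

theorem sum_adjMatrix_apply (v : V) : ∑ w, G.adjMatrix R v w = G.degree v := by
  simpa [mulVec, dotProduct] using G.adjMatrix_mulVec_const_apply (a := (1 : R)) (v := v)

theorem edgeIncMatrix_mul_transpose [DecidableEq V] :
    edgeIncMatrix R G * (edgeIncMatrix R G)ᵀ =
      diagonal (fun v => (G.degree v : R)) + G.adjMatrix R := by
  have h : edgeIncMatrix R G * (edgeIncMatrix R G)ᵀ = G.incMatrix R * (G.incMatrix R)ᵀ := by
    ext v w
    simp only [mul_apply, edgeIncMatrix_eq_submatrix, transpose_apply, submatrix_apply, id_eq]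
    rw [← Finset.sum_subset (Finset.subset_univ G.edgeFinset) fun e _ he => ?_]
    · exact (Finset.sum_subtype G.edgeFinset (fun _ => SimpleGraph.mem_edgeFinset)
        fun e => G.incMatrix R v e * G.incMatrix R w e).symm
    · have hv : e ∉ G.incidenceSet v := fun h => he (SimpleGraph.mem_edgeFinset.2 h.1)
      rw [G.incMatrix_of_notMem_incidenceSet hv, zero_mul]
  rw [h, G.incMatrix_mul_transpose]
  ext v w
  obtain rfl | hvw := eq_or_ne v w <;> simp [*]

theorem sum_edgeIncMatrix_row (v : V) : ∑ e, edgeIncMatrix R G v e = G.degree v := by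
  simpa [mul_apply, edgeIncMatrix, ← ite_and] using
    congrFun₂ (edgeIncMatrix_mul_transpose R G) v v

theorem sum_edgeIncMatrix_col (e : G.edgeSet) : ∑ v, edgeIncMatrix R G v e = 2 := by
  simpa [edgeIncMatrix_eq_submatrix] using G.sum_incMatrix_apply_of_mem_edgeSet e.2

variable {G}

theorem card_mul_eq_two_mul_card_edgeSet {r : ℕ} (hG : G.IsRegularOfDegree r) :
    Fintype.card V * r = 2 * Fintype.card G.edgeSet := by
  rw [← SimpleGraph.edgeFinset_card, ← G.sum_degrees_eq_twice_card_edges]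
  simp [hG.degree_eq]

theorem card_edgeSet_eq_one (hconn : G.Connected) (hG : G.IsRegularOfDegree 1) :
    Fintype.card G.edgeSet = 1 := by
  have hle := hconn.card_vert_le_card_edgeSet_add_one
  have hpos := Fintype.card_pos_iff.2 hconn.nonempty
  have hcard := card_mul_eq_two_mul_card_edgeSet hG
  rw [Nat.card_eq_fintype_card, Nat.card_eq_fintype_card] at hle
  lia

theorem edgeIncMatrix_transpose_mul [DecidableEq V] (hG : G.IsRegularOfDegree 1) :
    (edgeIncMatrix R G)ᵀ * edgeIncMatrix R G = (2 : R) • 1 := by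
  ext e f
  simp only [mul_apply, transpose_apply, Matrix.smul_apply, one_apply, smul_eq_mul, mul_ite,
    mul_one, mul_zero]
  split_ifs with hef
  · rw [← sum_edgeIncMatrix_col R G e]
    exact Finset.sum_congr rfl fun v _ => by simp [edgeIncMatrix, ← hef, ← ite_and]
  · refine Finset.sum_eq_zero fun v _ => ?_
    suffices h : v ∈ (e : Sym2 V) → v ∉ (f : Sym2 V) by
      simp only [edgeIncMatrix, of_apply]
      split_ifs <;> simp_all
    rintro ⟨a, ha⟩ ⟨b, hb⟩
    have hva : G.Adj v a := by simpa [ha] using e.2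
    have hvb : G.Adj v b := by simpa [hb] using f.2
    have hab : a = b := Finset.card_le_one.1 (hG.degree_eq v).le a (by simpa) b (by simpa)
    exact hef (Subtype.ext (by rw [ha, hb, hab]))

end Incidence

section Aalpha

variable {V : Type*} [Fintype V]

theorem Aalpha_apply [DecidableEq V] (G : SimpleGraph V) (α : ℝ) (v w : V) :
    Aalpha G α v w = (if v = w then α * G.degree v else 0) + (1 - α) * G.adjMatrix ℝ v w := by
  simp [Aalpha, diagonal_apply]

theorem Aalpha_mulVec_one (G : SimpleGraph V) (α : ℝ) :
    Aalpha G α *ᵥ 1 = fun v => (G.degree v : ℝ) := by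
  ext v
  simp only [mulVec, dotProduct, Aalpha_apply, Pi.one_apply, mul_one, Finset.sum_add_distrib,
    Finset.sum_ite_eq, Finset.mem_univ, if_true, ← Finset.mul_sum, sum_adjMatrix_apply]
  ring

variable [DecidableEq V]

theorem charmatrix_Aalpha (G : SimpleGraph V) (α : ℝ) :
    charmatrix (Aalpha G α) =
      diagonal (fun v => X - C (α * G.degree v)) - C (1 - α) • G.adjMatrix ℝ[X] := by
  ext v w
  obtain rfl | hvw := eq_or_ne v w
  · simp [Aalpha_apply]
  · simp [Aalpha_apply, hvw, apply_ite C]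

variable {G : SimpleGraph V} {r : ℕ} {α : ℝ}

theorem isRoot_charpoly_Aalpha [Nonempty V] (hG : G.IsRegularOfDegree r) (α : ℝ) :
    (Aalpha G α).charpoly.IsRoot r := by
  have hr : toLin' (Aalpha G α) 1 = (r : ℝ) • 1 := by
    ext v
    simp [Aalpha_mulVec_one, hG.degree_eq]
  rw [← charpoly_toLin', ← Module.End.hasEigenvalue_iff_isRoot_charpoly]
  exact Module.End.hasEigenvalue_of_hasEigenvector ⟨Module.End.mem_eigenspace_iff.2 hr, one_ne_zero⟩

-- Each Gershgorin disc of `A_α` has centre `α r` and radius `(1 - α) r`.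
theorem le_of_isRoot_charpoly_Aalpha (hG : G.IsRegularOfDegree r) (hα : α ≤ 1) {x : ℝ}
    (hx : (Aalpha G α).charpoly.IsRoot x) : x ≤ r := by
  rw [← charpoly_toLin', ← Module.End.hasEigenvalue_iff_isRoot_charpoly] at hx
  obtain ⟨v, hv⟩ := eigenvalue_mem_ball hx
  have hcenter : Aalpha G α v v = α * r := by simp [Aalpha_apply, hG.degree_eq]
  have hradius : ∑ w ∈ Finset.univ.erase v, ‖Aalpha G α v w‖ = (1 - α) * r := by
    rw [← hG.degree_eq v, ← sum_adjMatrix_apply, Finset.mul_sum,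
      ← Finset.sum_erase (a := v) Finset.univ (by simp)]
    refine Finset.sum_congr rfl fun w hw => ?_
    rw [Aalpha_apply, if_neg (Finset.ne_of_mem_erase hw).symm, zero_add, Real.norm_of_nonneg]
    exact mul_nonneg (sub_nonneg.2 hα) (by simp [SimpleGraph.adjMatrix_apply, apply_ite])
  rw [hcenter, hradius, Real.closedBall_eq_Icc] at hv
  linarith [hv.2]

theorem eigenvalue_Aalpha_eq_of_forall_le {μ : V → ℝ} {v₀ : V} (hG : G.IsRegularOfDegree r)
    (hα : α ≤ 1) (hμ : (Aalpha G α).charpoly = ∏ v, (X - C (μ v)))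
    (hv₀ : ∀ v, μ v ≤ μ v₀) : μ v₀ = r := by
  have hroot (x : ℝ) : (Aalpha G α).charpoly.IsRoot x ↔ ∃ v, μ v = x := by
    rw [IsRoot, hμ, eval_prod, Finset.prod_eq_zero_iff]
    simp [sub_eq_zero, eq_comm]
  have : Nonempty V := ⟨v₀⟩
  obtain ⟨v, hv⟩ := (hroot r).1 (isRoot_charpoly_Aalpha hG α)
  exact le_antisymm (le_of_isRoot_charpoly_Aalpha hG hα ((hroot _).2 ⟨v₀, rfl⟩)) (hv ▸ hv₀ v)

end Aalpha

section rEdgeJoin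

section

variable {V₁ V₂ : Type*} (G₁ : SimpleGraph V₁) (G₂ : SimpleGraph V₂)

theorem adjMatrix_rEdgeJoin (R : Type*) [Semiring R] :
    (rEdgeJoin G₁ G₂).adjMatrix R =
      fromBlocks (G₁.adjMatrix R) (fromCols (edgeIncMatrix R G₁) 0)
        (fromRows (edgeIncMatrix R G₁)ᵀ 0)
        (fromBlocks 0 (of fun _ _ => 1) (of fun _ _ => 1) (G₂.adjMatrix R)) := by
  ext (v | e | u) (w | f | x) <;> rw [SimpleGraph.adjMatrix_apply] <;>
    simp [rEdgeJoin, edgeIncMatrix, SimpleGraph.adj_comm,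
      and_iff_right_of_imp SimpleGraph.Adj.ne]

variable [Fintype V₁] [Fintype V₂]

theorem degree_rEdgeJoin (a : V₁ ⊕ (G₁.edgeSet ⊕ V₂)) :
    (rEdgeJoin G₁ G₂).degree a =
      Sum.elim (fun v => 2 * G₁.degree v)
        (Sum.elim (fun _ => 2 + Fintype.card V₂)
          (fun u => Fintype.card G₁.edgeSet + G₂.degree u)) a := by
  have h := sum_adjMatrix_apply ℕ (rEdgeJoin G₁ G₂) a
  rw [Nat.cast_id, adjMatrix_rEdgeJoin] at h
  rw [← h]
  obtain v | e | u := a <;>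
    simp [-SimpleGraph.adjMatrix_apply, sum_adjMatrix_apply, sum_edgeIncMatrix_row,
      sum_edgeIncMatrix_col, two_mul]

end

variable {V₁ V₂ : Type*} [Fintype V₁] [DecidableEq V₁] [Fintype V₂] [DecidableEq V₂]
  {G₁ : SimpleGraph V₁} {r : ℕ}

theorem charpoly_Aalpha_rEdgeJoin (hG : G₁.IsRegularOfDegree r) (G₂ : SimpleGraph V₂) (α : ℝ) :
    (Aalpha (rEdgeJoin G₁ G₂) α).charpoly =
      (fromBlocks
        (fromBlocks (charmatrix (Aalpha G₁ α) - C (α * r) • 1) 0 0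
          (charmatrix (Aalpha G₂ α) - C (α * Fintype.card G₁.edgeSet) • 1))
        (fromRows (-(C (1 - α) • edgeIncMatrix ℝ[X] G₁)) (of fun _ _ => -C (1 - α)))
        (fromCols (-(C (1 - α) • (edgeIncMatrix ℝ[X] G₁)ᵀ)) (of fun _ _ => -C (1 - α)))
        ((X - C (α * (2 + Fintype.card V₂))) • 1)).det := by
  let e : (V₁ ⊕ V₂) ⊕ G₁.edgeSet ≃ V₁ ⊕ (G₁.edgeSet ⊕ V₂) :=
    (Equiv.sumAssoc _ _ _).trans (Equiv.sumCongr (Equiv.refl _) (Equiv.sumComm _ _))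
  rw [charpoly, ← det_submatrix_equiv_self e]
  congr 1
  simp only [charmatrix_Aalpha, adjMatrix_rEdgeJoin, degree_rEdgeJoin]
  ext1 ((v | u) | f) ((w | x) | g)
  all_goals
    simp [e, diagonal_apply, one_apply, hG.degree_eq, -SimpleGraph.adjMatrix_apply, map_ofNat C 2]
  all_goals
    split_ifs <;> ring

end rEdgeJoin

theorem monic_X_sub_C_mul_X_sub_C_sub_C {R : Type*} [CommRing R] (a b c : R) :
    ((X - C a) * (X - C b) - C c).Monic := by
  nontriviality R
  refine ((monic_X_sub_C a).mul (monic_X_sub_C b)).sub_of_left (degree_C_le.trans_lt ?_)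
  rw [(monic_X_sub_C b).degree_mul, degree_X_sub_C, degree_X_sub_C]
  norm_num

/-- The paper's `G_i` as a function of the `A_α`-eigenvalue `a` of an `r`-regular graph, where `s`
is the number of vertices of the second factor of the `R`-edge join. -/
def vertexQuadratic (α r s a : ℝ) : ℝ[X] :=
  (X - C (α * (2 + s))) * (X - C (α * r + a)) - C ((1 - α) * (a + r - 2 * α * r))

theorem monic_vertexQuadratic (α r s a : ℝ) : (vertexQuadratic α r s a).Monic :=
  monic_X_sub_C_mul_X_sub_C_sub_C _ _ _

theorem vertexQuadratic_mul_add {r n m : ℝ} (h : n * r = 2 * m) (α s : ℝ) :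
    vertexQuadratic α r s r * C ((1 - α) ^ 2 * m) + C ((1 - α) ^ 2 * r) ^ 2 * C n =
      (X - C (α * (2 + s))) * (C ((1 - α) ^ 2 * m) * (X - C (α * r + r))) := by
  have hC : C n * C r = 2 * C m := by
    simpa only [C_mul, C_ofNat] using congrArg (C : ℝ → ℝ[X]) h
  simp only [vertexQuadratic, C_add, C_sub, C_mul, C_pow, C_ofNat, C_1]
  linear_combination (1 - C α) ^ 4 * C r * hC

/-- The Schur complement, multiplied by `X - α (2 + s)`, of the block of the inserted vertices in
the block of `V(G)` of the characteristic matrix of the `R`-edge join of an `r`-regular graph `G`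
and a graph on `s` vertices. -/
def vertexSchur {V : Type*} [Fintype V] [DecidableEq V] (G : SimpleGraph V) (α r s : ℝ) :
    Matrix V V ℝ[X] :=
  (X - C (α * (2 + s))) • (charmatrix (Aalpha G α) - C (α * r) • 1) -
    C ((1 - α) ^ 2) • (edgeIncMatrix ℝ[X] G * (edgeIncMatrix ℝ[X] G)ᵀ)

section vertexSchur

variable {V : Type*} [Fintype V] [DecidableEq V] {G : SimpleGraph V} {r : ℕ}

theorem Aalpha_map_C (hG : G.IsRegularOfDegree r) (α : ℝ) :
    (Aalpha G α).map C = C ((2 * α - 1) * r) • 1 +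
      C (1 - α) • (edgeIncMatrix ℝ[X] G * (edgeIncMatrix ℝ[X] G)ᵀ) := by
  rw [edgeIncMatrix_mul_transpose]
  ext1 v w
  obtain rfl | hvw := eq_or_ne v w
  · simp only [map_apply, Aalpha_apply, if_true, hG.degree_eq, SimpleGraph.adjMatrix_apply,
      SimpleGraph.irrefl, if_false, mul_zero, add_zero, C_sub, C_mul, C_ofNat, C_1, map_natCast,
      Matrix.add_apply, Matrix.smul_apply, one_apply_eq, diagonal_apply_eq, smul_eq_mul, mul_one]
    ring
  · simp [Aalpha_apply, hvw, apply_ite C]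

theorem vertexSchur_eq_sub_smul_mul (hG : G.IsRegularOfDegree r) (α s : ℝ) :
    vertexSchur G α r s =
      ((X - C (α * (2 + s))) * (X - C ((3 * α - 1) * r))) • 1 -
        (C (1 - α) * (X - C (α * (2 + s)) + C (1 - α))) •
          (edgeIncMatrix ℝ[X] G * (edgeIncMatrix ℝ[X] G)ᵀ) := by
  rw [vertexSchur, charmatrix, RingHom.mapMatrix_apply, Aalpha_map_C hG, scalar_apply,
    ← smul_one_eq_diagonal]
  simp only [C_add, C_sub, C_mul, C_pow, C_ofNat, C_1]
  module

theorem vertexSchur_eq_sub_smul_map (hG : G.IsRegularOfDegree r) (α s : ℝ) :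
    vertexSchur G α r s =
      ((X - C (α * (2 + s))) * (X - C (α * r)) - C ((1 - α) * (r - 2 * α * r))) • 1 -
        (X - C (α * (2 + s)) + C (1 - α)) • (Aalpha G α).map C := by
  rw [vertexSchur_eq_sub_smul_mul hG, Aalpha_map_C hG]
  simp only [C_add, C_sub, C_mul, C_ofNat, C_1]
  module

theorem vertexSchur_mulVec_one (hG : G.IsRegularOfDegree r) (α s : ℝ) :
    vertexSchur G α r s *ᵥ 1 = fun _ => vertexQuadratic α r s r := by
  have hrow (v : V) : ((Aalpha G α).map C *ᵥ 1) v = C (r : ℝ) := by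
    rw [← hG.degree_eq v, ← congrFun (Aalpha_mulVec_one G α) v]
    simp [mulVec, dotProduct]
  ext1 v
  rw [vertexSchur_eq_sub_smul_map hG, sub_mulVec, smul_mulVec, smul_mulVec, one_mulVec,
    Pi.sub_apply, Pi.smul_apply, Pi.smul_apply, hrow, vertexQuadratic]
  simp only [Pi.one_apply, smul_eq_mul, mul_one, C_add, C_sub, C_mul, C_ofNat, C_1]
  ring

theorem det_vertexSchur {α : ℝ} {μ : V → ℝ} (hG : G.IsRegularOfDegree r)
    (hμ : (Aalpha G α).charpoly = ∏ v, (X - C (μ v))) (s : ℝ) :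
    (vertexSchur G α r s).det = ∏ v, vertexQuadratic α r s (μ v) := by
  rw [vertexSchur_eq_sub_smul_map hG, det_smul_one_sub_smul_map_C hμ]
  refine Finset.prod_congr rfl fun v _ => ?_
  simp only [vertexQuadratic, C_add, C_sub, C_mul, C_ofNat, C_1]
  ring

theorem det_vertexSchur_of_isRegularOfDegree_one (hG : G.IsRegularOfDegree 1) (α s : ℝ) :
    (vertexSchur G α 1 s).det =
      ((X - C (α * (2 + s))) * (X - C (3 * α - 1)) * vertexQuadratic α 1 s 1) ^
        Fintype.card G.edgeSet := by
  let B := edgeIncMatrix ℝ[X] G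
  set b := C (1 - α) * (X - C (α * (2 + s)) + C (1 - α)) with hb
  set a := (X - C (α * (2 + s))) * (X - C (3 * α - 1)) with ha
  have ha₀ : a ≠ 0 := ((monic_X_sub_C _).mul (monic_X_sub_C _)).ne_zero
  have hab : a - b * 2 = vertexQuadratic α 1 s 1 := by
    simp only [ha, hb, vertexQuadratic, C_add, C_sub, C_mul, C_ofNat, C_1]
    ring
  have hcard : Fintype.card V = Fintype.card G.edgeSet + Fintype.card G.edgeSet := by
    rw [← two_mul, ← card_mul_eq_two_mul_card_edgeSet hG, mul_one]
  have h := det_smul_one_sub_mul_comm Bᵀ (b • B) a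
  rw [Matrix.mul_smul, edgeIncMatrix_transpose_mul _ hG, smul_smul, ← sub_smul, det_smul, det_one,
    mul_one, hab, hcard, pow_add, mul_right_comm] at h
  have hS := vertexSchur_eq_sub_smul_mul hG α s
  rw [Nat.cast_one, mul_one, ← ha, ← hb, ← Matrix.smul_mul] at hS
  rw [hS, mul_pow]
  exact mul_right_cancel₀ (pow_ne_zero _ ha₀) h

end vertexSchur

section coronal

variable {V₁ V₂ : Type*} [Fintype V₁] [DecidableEq V₁] [Fintype V₂] [DecidableEq V₂]
  {G₁ : SimpleGraph V₁} {r : ℕ}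

theorem charpoly_Aalpha_rEdgeJoin_mul_pow (hG : G₁.IsRegularOfDegree r) (G₂ : SimpleGraph V₂)
    (α : ℝ) :
    (Aalpha (rEdgeJoin G₁ G₂) α).charpoly *
        (X - C (α * (2 + Fintype.card V₂))) ^ (Fintype.card V₁ + Fintype.card V₂) =
      (X - C (α * (2 + Fintype.card V₂))) ^ Fintype.card G₁.edgeSet *
        (fromBlocks (vertexSchur G₁ α r (Fintype.card V₂)) (of fun _ _ => -C ((1 - α) ^ 2 * r))
          (of fun _ _ => -C ((1 - α) ^ 2 * r))
          ((X - C (α * (2 + Fintype.card V₂))) •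
              (charmatrix (Aalpha G₂ α) - C (α * Fintype.card G₁.edgeSet) • 1) -
            of fun _ _ => C ((1 - α) ^ 2 * Fintype.card G₁.edgeSet))).det := by
  rw [charpoly_Aalpha_rEdgeJoin hG, ← Fintype.card_sum, det_fromBlocks_smul_one_mul_pow,
    fromRows_mul_fromCols, fromBlocks_smul, sub_eq_add_neg (fromBlocks _ _ _ _), fromBlocks_neg,
    fromBlocks_add]
  congr 3
  · rw [vertexSchur, sub_eq_add_neg (_ • _), C_pow, sq]
    simp only [Matrix.neg_mul, Matrix.mul_neg, neg_neg, Matrix.smul_mul, Matrix.mul_smul, smul_smul,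
      smul_neg]
  · ext1 v u
    simp only [smul_zero, Matrix.neg_mul, Matrix.smul_mul, neg_neg, Matrix.add_apply,
      Matrix.zero_apply, Matrix.smul_apply, mul_apply, of_apply, smul_eq_mul, zero_add,
      mul_neg, Finset.sum_neg_distrib, ← Finset.sum_mul, sum_edgeIncMatrix_row, hG.degree_eq, C_mul,
      C_pow, map_natCast]
    ring
  · ext1 u v
    simp only [smul_zero, Matrix.mul_neg, Matrix.mul_smul, neg_neg, Matrix.add_apply,
      Matrix.zero_apply, Matrix.smul_apply, mul_apply, of_apply, transpose_apply, smul_eq_mul,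
      zero_add, neg_mul, Finset.sum_neg_distrib, ← Finset.mul_sum, sum_edgeIncMatrix_row,
      hG.degree_eq, C_mul, C_pow, map_natCast]
    ring
  · ext1 u w
    simp only [Matrix.add_apply, Matrix.sub_apply, Matrix.neg_apply, Matrix.smul_apply, mul_apply,
      of_apply, Finset.sum_const, Finset.card_univ, nsmul_eq_mul, smul_eq_mul, C_mul, C_pow,
      map_natCast]
    ring

theorem charpoly_Aalpha_rEdgeJoin_mul (hG : G₁.IsRegularOfDegree r) {G₂ : SimpleGraph V₂}
    {α : ℝ} {w : V₂ → ℝ[X]} {h : ℝ[X]}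
    (hw : (charmatrix (Aalpha G₂ α) - C (α * Fintype.card G₁.edgeSet) • 1) *ᵥ w = fun _ => h) :
    (Aalpha (rEdgeJoin G₁ G₂) α).charpoly *
        ((X - C (α * (2 + Fintype.card V₂))) ^ Fintype.card V₁ *
          (vertexQuadratic α r (Fintype.card V₂) r * h)) =
      (X - C (α * (2 + Fintype.card V₂))) ^ Fintype.card G₁.edgeSet *
        (vertexSchur G₁ α r (Fintype.card V₂)).det *
        (charmatrix (Aalpha G₂ α) - C (α * Fintype.card G₁.edgeSet) • 1).det *
        (vertexQuadratic α r (Fintype.card V₂) r * h -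
          C ((1 - α) ^ 2 * Fintype.card G₁.edgeSet) * (X - C (α * r + r)) * ∑ u, w u) := by
  have hD := charpoly_Aalpha_rEdgeJoin_mul_pow hG G₂ α
  set T := X - C (α * (2 + Fintype.card V₂))
  set m := Fintype.card G₁.edgeSet
  set Q := charmatrix (Aalpha G₂ α) - C (α * m) • 1
  set g := vertexQuadratic α r (Fintype.card V₂) r with hg
  set k := C ((1 - α) ^ 2 * m) * (X - C (α * r + r))
  have hgQw : (g • Q) *ᵥ w = fun _ => g * h := by
    rw [smul_mulVec, hw]
    rfl
  have hgk : g * C ((1 - α) ^ 2 * m) + C ((1 - α) ^ 2 * r) ^ 2 * C (Fintype.card V₁ : ℝ) =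
      T * k :=
    vertexQuadratic_mul_add (mod_cast card_mul_eq_two_mul_card_edgeSet hG) α _
  have hgkT : g • (T • Q - of fun _ _ => C ((1 - α) ^ 2 * m)) -
      (of fun _ _ => -C ((1 - α) ^ 2 * r) * -C ((1 - α) ^ 2 * r) * ∑ _v : V₁, 1) =
      T • (g • Q - of fun _ _ => k) := by
    ext1 u v
    simp only [Matrix.sub_apply, Matrix.smul_apply, of_apply, smul_eq_mul, Finset.sum_const,
      Finset.card_univ, nsmul_one]
    rw [map_natCast] at hgk
    linear_combination -hgk
  have hschur := det_fromBlocks_const_mul_pow (vertexSchur_mulVec_one hG α (Fintype.card V₂))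
    (T • Q - of fun _ _ => C ((1 - α) ^ 2 * m)) (-C ((1 - α) ^ 2 * r))
    (-C ((1 - α) ^ 2 * r))
  simp only [Pi.one_apply] at hschur
  rw [← hg, hgkT, det_smul] at hschur
  have hcoronal := det_sub_const_mul hgQw k
  rw [det_smul] at hcoronal
  have hT₀ : T ≠ 0 := X_sub_C_ne_zero _
  have hg₀ : g ≠ 0 := (monic_vertexQuadratic _ _ _ _).ne_zero
  refine mul_right_cancel₀ (pow_ne_zero (Fintype.card V₂) (mul_ne_zero hT₀ hg₀)) ?_
  rw [pow_add] at hD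
  rw [mul_pow]
  linear_combination (g ^ Fintype.card V₂ * g * h) * hD +
    T ^ m * g * h * hschur +
    T ^ m * T ^ Fintype.card V₂ *
      (vertexSchur G₁ α r (Fintype.card V₂)).det * hcoronal

end coronal

/-- The paper's quartic `F`, where `m` is the number of edges of the `r`-regular graph. -/
def joinQuartic (α r m p q : ℝ) : ℝ[X] :=
  vertexQuadratic α r (p + q) r *
      ((X - C (α * (m + q))) * (X - C (α * (m + p))) - C ((1 - α) ^ 2 * p * q)) -
    C ((1 - α) ^ 2 * m) * (X - C (α * r + r)) *
      (C p * (X - C (α * (m + p))) + C q * (X - C (α * (m + q))) + C (2 * (1 - α) * p * q))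

section completeBipartite

variable {P Q : Type*} [Fintype P] [DecidableEq P] [Fintype Q] [DecidableEq Q]

theorem charmatrix_Aalpha_completeBipartiteGraph_sub_smul_one (α x : ℝ) :
    charmatrix (Aalpha (completeBipartiteGraph P Q) α) - C (α * x) • 1 =
      fromBlocks ((X - C (α * (x + Fintype.card Q))) • 1) (of fun _ _ => -C (1 - α))
        (of fun _ _ => -C (1 - α)) ((X - C (α * (x + Fintype.card P))) • 1) := by
  have hdeg (a : P ⊕ Q) : (completeBipartiteGraph P Q).degree a =
      Sum.elim (fun _ => Fintype.card Q) (fun _ => Fintype.card P) a := by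
    rw [← Nat.cast_id (SimpleGraph.degree _ _), ← sum_adjMatrix_apply ℕ, Fintype.sum_sum_type]
    obtain i | j := a <;> simp
  rw [charmatrix_Aalpha]
  simp only [hdeg]
  ext1 (i | j) (k | l)
  · obtain rfl | hik := eq_or_ne i k <;> simp [*, mul_add, sub_sub, add_comm]
  · simp
  · simp
  · obtain rfl | hjl := eq_or_ne j l <;> simp [*, mul_add, sub_sub, add_comm]

theorem det_charmatrix_Aalpha_completeBipartiteGraph_sub_smul_one [Nonempty P] [Nonempty Q]
    (α x : ℝ) :
    (charmatrix (Aalpha (completeBipartiteGraph P Q) α) - C (α * x) • 1).det =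
      (X - C (α * (x + Fintype.card Q))) ^ (Fintype.card P - 1) *
        (X - C (α * (x + Fintype.card P))) ^ (Fintype.card Q - 1) *
        ((X - C (α * (x + Fintype.card Q))) * (X - C (α * (x + Fintype.card P))) -
          C ((1 - α) ^ 2 * Fintype.card P * Fintype.card Q)) := by
  rw [charmatrix_Aalpha_completeBipartiteGraph_sub_smul_one,
    det_fromBlocks_smul_one_const (X_sub_C_ne_zero _)]
  simp only [neg_sq, C_mul, C_pow, map_natCast]

theorem charmatrix_Aalpha_completeBipartiteGraph_sub_smul_one_mulVec (α x : ℝ) :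
    (charmatrix (Aalpha (completeBipartiteGraph P Q) α) - C (α * x) • 1) *ᵥ
        Sum.elim (fun _ => X - C (α * (x + Fintype.card P)) + C ((1 - α) * Fintype.card Q))
          (fun _ => X - C (α * (x + Fintype.card Q)) + C ((1 - α) * Fintype.card P)) =
      fun _ => (X - C (α * (x + Fintype.card Q))) * (X - C (α * (x + Fintype.card P))) -
        C ((1 - α) ^ 2 * Fintype.card P * Fintype.card Q) := by
  rw [charmatrix_Aalpha_completeBipartiteGraph_sub_smul_one]
  simpa only [neg_mul, sub_neg_eq_add, neg_sq, C_mul, C_pow, map_natCast] using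
    fromBlocks_smul_one_const_mulVec (m := P) (n := Q) (X - C (α * (x + Fintype.card Q)))
      (X - C (α * (x + Fintype.card P))) (-C (1 - α))

variable {V : Type*} [Fintype V] [DecidableEq V] {G : SimpleGraph V} {r : ℕ} [Nonempty P]
  [Nonempty Q]

theorem charpoly_Aalpha_rEdgeJoin_completeBipartiteGraph_mul (hG : G.IsRegularOfDegree r)
    (α : ℝ) :
    (Aalpha (rEdgeJoin G (completeBipartiteGraph P Q)) α).charpoly *
        ((X - C (α * (2 + (Fintype.card P + Fintype.card Q)))) ^ Fintype.card V *
          vertexQuadratic α r (Fintype.card P + Fintype.card Q) r) =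
      (X - C (α * (2 + (Fintype.card P + Fintype.card Q)))) ^ Fintype.card G.edgeSet *
        (vertexSchur G α r (Fintype.card P + Fintype.card Q)).det *
        ((X - C (α * (Fintype.card G.edgeSet + Fintype.card Q))) ^ (Fintype.card P - 1) *
          (X - C (α * (Fintype.card G.edgeSet + Fintype.card P))) ^ (Fintype.card Q - 1)) *
        joinQuartic α r (Fintype.card G.edgeSet) (Fintype.card P) (Fintype.card Q) := by
  set m := Fintype.card G.edgeSet
  have h := charpoly_Aalpha_rEdgeJoin_mul hG
    (charmatrix_Aalpha_completeBipartiteGraph_sub_smul_one_mulVec (P := P) (Q := Q) α m)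
  rw [det_charmatrix_Aalpha_completeBipartiteGraph_sub_smul_one, Fintype.card_sum, Nat.cast_add,
    Fintype.sum_sum_type] at h
  refine mul_right_cancel₀ (monic_X_sub_C_mul_X_sub_C_sub_C (α * (m + Fintype.card Q))
    (α * (m + Fintype.card P)) ((1 - α) ^ 2 * Fintype.card P * Fintype.card Q)).ne_zero ?_
  rw [joinQuartic]
  simp only [Sum.elim_inl, Sum.elim_inr, Finset.sum_const, Finset.card_univ, nsmul_eq_mul, C_add,
    C_sub, C_mul, C_pow, C_ofNat, C_1, map_natCast] at h ⊢
  linear_combination h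

theorem charpoly_Aalpha_rEdgeJoin_completeBipartiteGraph_of_isRegularOfDegree_one [Nonempty V]
    (hG : G.IsRegularOfDegree 1) (α : ℝ) :
    (Aalpha (rEdgeJoin G (completeBipartiteGraph P Q)) α).charpoly =
      (X - C (3 * α - 1)) ^ Fintype.card G.edgeSet *
        (X - C (α * (Fintype.card G.edgeSet + Fintype.card P))) ^ (Fintype.card Q - 1) *
        (X - C (α * (Fintype.card G.edgeSet + Fintype.card Q))) ^ (Fintype.card P - 1) *
        vertexQuadratic α 1 (Fintype.card P + Fintype.card Q) 1 ^ (Fintype.card G.edgeSet - 1) *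
        joinQuartic α 1 (Fintype.card G.edgeSet) (Fintype.card P) (Fintype.card Q) := by
  have hcard := card_mul_eq_two_mul_card_edgeSet hG
  obtain ⟨m, hm⟩ : ∃ m, Fintype.card G.edgeSet = m + 1 :=
    Nat.exists_eq_add_one.2 (by have := Fintype.card_pos (α := V); lia)
  have h := charpoly_Aalpha_rEdgeJoin_completeBipartiteGraph_mul (P := P) (Q := Q) hG α
  rw [Nat.cast_one, det_vertexSchur_of_isRegularOfDegree_one hG,
    show Fintype.card V = m + 1 + (m + 1) by lia, hm, mul_pow, mul_pow] at h
  rw [hm, Nat.add_sub_cancel]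
  have hT₀ : X - C (α * (2 + (Fintype.card P + Fintype.card Q))) ≠ 0 := X_sub_C_ne_zero _
  have hg₀ := (monic_vertexQuadratic α 1 (Fintype.card P + Fintype.card Q) 1).ne_zero
  refine mul_right_cancel₀ (mul_ne_zero (pow_ne_zero _ hT₀) hg₀) (h.trans ?_)
  ring

theorem charpoly_Aalpha_rEdgeJoin_completeBipartiteGraph_of_two_le (hG : G.IsRegularOfDegree r)
    (hr : 2 ≤ r) {α : ℝ} {μ : V → ℝ} (hμ : (Aalpha G α).charpoly = ∏ v, (X - C (μ v))) {v₀ : V}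
    (hv₀ : μ v₀ = r) :
    (Aalpha (rEdgeJoin G (completeBipartiteGraph P Q)) α).charpoly =
      (X - C (α * (2 + (Fintype.card P + Fintype.card Q)))) ^
          (Fintype.card G.edgeSet - Fintype.card V) *
        (X - C (α * (Fintype.card G.edgeSet + Fintype.card P))) ^ (Fintype.card Q - 1) *
        (X - C (α * (Fintype.card G.edgeSet + Fintype.card Q))) ^ (Fintype.card P - 1) *
        (∏ v with v ≠ v₀, vertexQuadratic α r (Fintype.card P + Fintype.card Q) (μ v)) *
        joinQuartic α r (Fintype.card G.edgeSet) (Fintype.card P) (Fintype.card Q) := by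
  have hcard := card_mul_eq_two_mul_card_edgeSet hG
  obtain ⟨k, hk⟩ : ∃ k, Fintype.card G.edgeSet = Fintype.card V + k :=
    Nat.exists_eq_add_of_le (by nlinarith)
  have h := charpoly_Aalpha_rEdgeJoin_completeBipartiteGraph_mul (P := P) (Q := Q) hG α
  rw [det_vertexSchur hG hμ, ← Finset.mul_prod_erase _ _ (Finset.mem_univ v₀), hv₀, hk] at h
  rw [hk, Nat.add_sub_cancel_left, Finset.filter_ne']
  have hT₀ : X - C (α * (2 + (Fintype.card P + Fintype.card Q))) ≠ 0 := X_sub_C_ne_zero _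
  have hg₀ := (monic_vertexQuadratic α r (Fintype.card P + Fintype.card Q) r).ne_zero
  refine mul_right_cancel₀ (mul_ne_zero (pow_ne_zero _ hT₀) hg₀) (h.trans ?_)
  ring

end completeBipartite

theorem vertexQuadratic_eq (α r p q a : ℝ) :
    vertexQuadratic α r (p + q) a =
      X ^ 2 - C (2 * α + α * r + α * p + α * q + a) * X +
        C (α ^ 2 * r * p + α ^ 2 * r * q + 3 * α * r - r + (3 * α + α * p + α * q - 1) * a) := by
  simp only [vertexQuadratic, C_add, C_sub, C_mul, C_pow, C_ofNat, C_1]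
  ring

theorem joinQuartic_eq (α r m p q : ℝ) :
    joinQuartic α r m p q =
      (X ^ 2 - C (2 * α + α * r + α * p + α * q + r) * X +
          C (α ^ 2 * r * p + α ^ 2 * r * q + 6 * α * r + α * r * p + α * r * q - 2 * r)) *
        (X ^ 2 - C (2 * α * m + α * p + α * q) * X +
          C (α ^ 2 * m ^ 2 + α ^ 2 * m * p + α ^ 2 * m * q + 2 * α * p * q - p * q)) -
      C (m * (1 - α) ^ 2) * (X - C (α * r + r)) *
        ((C p + C q) * X -
          C (α * m * p + α * m * q + α * p ^ 2 + α * q ^ 2 + 2 * α * p * q - 2 * p * q)) := by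
  simp only [joinQuartic, vertexQuadratic, C_add, C_sub, C_mul, C_pow, C_ofNat, C_1]
  ring

theorem Aalpha_spectrum_rEdgeJoin_completeBipartite_general {V P Q : Type*} [Fintype V]
    [DecidableEq V] [Fintype P] [DecidableEq P] [Nonempty P] [Fintype Q] [DecidableEq Q]
    [Nonempty Q] {G : SimpleGraph V} {r : ℕ} (hG : G.IsRegularOfDegree r) {α : ℝ} {μ : V → ℝ}
    (hμ : (Aalpha G α).charpoly = ∏ v, (X - C (μ v))) {v₀ : V} (hv₀ : μ v₀ = r) :
    (r = 1 →
      (Aalpha (rEdgeJoin G (completeBipartiteGraph P Q)) α).charpoly =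
        (X - C (3 * α - 1)) ^ Fintype.card G.edgeSet *
          (X - C (α * (Fintype.card G.edgeSet + Fintype.card P))) ^ (Fintype.card Q - 1) *
          (X - C (α * (Fintype.card G.edgeSet + Fintype.card Q))) ^ (Fintype.card P - 1) *
          vertexQuadratic α 1 (Fintype.card P + Fintype.card Q) 1 ^ (Fintype.card G.edgeSet - 1) *
          joinQuartic α 1 (Fintype.card G.edgeSet) (Fintype.card P) (Fintype.card Q)) ∧
    (2 ≤ r →
      (Aalpha (rEdgeJoin G (completeBipartiteGraph P Q)) α).charpoly =
        (X - C (α * (2 + (Fintype.card P + Fintype.card Q)))) ^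
            (Fintype.card G.edgeSet - Fintype.card V) *
          (X - C (α * (Fintype.card G.edgeSet + Fintype.card P))) ^ (Fintype.card Q - 1) *
          (X - C (α * (Fintype.card G.edgeSet + Fintype.card Q))) ^ (Fintype.card P - 1) *
          (∏ v with v ≠ v₀, vertexQuadratic α r (Fintype.card P + Fintype.card Q) (μ v)) *
          joinQuartic α r (Fintype.card G.edgeSet) (Fintype.card P) (Fintype.card Q)) := by
  have : Nonempty V := ⟨v₀⟩
  refine ⟨?_, fun hr => charpoly_Aalpha_rEdgeJoin_completeBipartiteGraph_of_two_le hG hr hμ hv₀⟩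
  rintro rfl
  exact charpoly_Aalpha_rEdgeJoin_completeBipartiteGraph_of_isRegularOfDegree_one hG α

/-- Corollary: the `A_α`-spectrum (as the factorization of the `A_α`-characteristic
polynomial) of the `R`-edge join `G₁⟨e⟩K_{p,q}` of an `r₁`-regular graph `G₁` and the
complete bipartite graph `K_{p,q}`, in the cases `r₁ = 1` and `r₁ ≥ 2`. -/
theorem Aalpha_spectrum_rEdgeJoin_completeBipartite
    {n₁ m₁ r₁ p q : ℕ} (hp : 1 ≤ p) (hq : 1 ≤ q)
    (G₁ : SimpleGraph (Fin n₁))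
    (hconn₁ : G₁.Connected) (hreg₁ : G₁.IsRegularOfDegree r₁)
    (hm : Fintype.card G₁.edgeSet = m₁)
    (α : ℝ) (hα : α ∈ Set.Icc (0 : ℝ) 1)
    (μ₁ : Fin n₁ → ℝ) (hμ₁ : Antitone μ₁)
    (hμ₁ch : (Aalpha G₁ α).charpoly = ∏ i, (X - C (μ₁ i))) :
    (r₁ = 1 →
      (Aalpha (rEdgeJoin G₁ (completeBipartiteGraph (Fin p) (Fin q))) α).charpoly =
        (X - C (3 * α - 1)) *
        (X - C (α * (1 + p))) ^ (q - 1) *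
        (X - C (α * (1 + q))) ^ (p - 1) *
        ((X ^ 2 - C (2 * α + α * p + α * q + α + 1) * X
            + C (α ^ 2 * p + α ^ 2 * q + 6 * α + α * p + α * q - 2)) *
            (X ^ 2 - C (2 * α + α * p + α * q) * X
              + C (α ^ 2 + α ^ 2 * p + α ^ 2 * q + 2 * α * p * q - p * q))
          - C ((1 - α) ^ 2) * (X - C (α + 1)) *
            ((C ((p : ℝ)) + C ((q : ℝ))) * X
              - C (α * p + α * q + α * p ^ 2 + α * q ^ 2 + 2 * α * p * q
                    - 2 * (p : ℝ) * q)))) ∧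
    (2 ≤ r₁ →
      (Aalpha (rEdgeJoin G₁ (completeBipartiteGraph (Fin p) (Fin q))) α).charpoly =
        (X - C (α * (2 + p + q))) ^ (m₁ - n₁) *
        (X - C (α * (m₁ + p))) ^ (q - 1) *
        (X - C (α * (m₁ + q))) ^ (p - 1) *
        (∏ i ∈ Finset.univ.filter (fun i : Fin n₁ => i.val ≠ 0),
          (X ^ 2 - C (2 * α + α * r₁ + α * p + α * q + μ₁ i) * X
            + C (α ^ 2 * r₁ * p + α ^ 2 * r₁ * q + 3 * α * r₁ - r₁
                  + (3 * α + α * p + α * q - 1) * μ₁ i))) *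
        ((X ^ 2 - C (2 * α + α * r₁ + α * p + α * q + r₁) * X
            + C (α ^ 2 * r₁ * p + α ^ 2 * r₁ * q + 6 * α * r₁ + α * r₁ * p
                  + α * r₁ * q - 2 * r₁)) *
            (X ^ 2 - C (2 * α * m₁ + α * p + α * q) * X
              + C (α ^ 2 * m₁ ^ 2 + α ^ 2 * m₁ * p + α ^ 2 * m₁ * q + 2 * α * p * q - p * q))
          - C (m₁ * (1 - α) ^ 2) * (X - C (α * r₁ + r₁)) *
            ((C ((p : ℝ)) + C ((q : ℝ))) * X
              - C (α * m₁ * p + α * m₁ * q + α * p ^ 2 + α * q ^ 2 + 2 * α * p * q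
                    - 2 * (p : ℝ) * q)))) := by
  subst hm
  have : Nonempty (Fin p) := ⟨⟨0, hp⟩⟩
  have : Nonempty (Fin q) := ⟨⟨0, hq⟩⟩
  obtain ⟨n, rfl⟩ : ∃ n, n₁ = n + 1 :=
    Nat.exists_eq_add_one.2 (Fin.pos_iff_nonempty.2 hconn₁.nonempty)
  have hμ₀ : μ₁ 0 = r₁ := eigenvalue_Aalpha_eq_of_forall_le hreg₁ hα.2 hμ₁ch
    fun i => hμ₁ (Fin.zero_le i)
  obtain ⟨h₁, h₂⟩ := Aalpha_spectrum_rEdgeJoin_completeBipartite_general (P := Fin p)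
    (Q := Fin q) hreg₁ hμ₁ch hμ₀
  refine ⟨fun hr => ?_, fun hr => ?_⟩
  · subst hr
    have hsum : 2 * α + α + α * p + α * q = 2 * α + α * p + α * q + α := by ring
    rw [h₁ rfl, card_edgeSet_eq_one hconn₁ hreg₁, joinQuartic_eq]
    simp only [Fintype.card_fin, Nat.cast_one, pow_one, pow_zero, one_pow, mul_one, one_mul,
      Nat.sub_self, hsum]
  · rw [h₂ hr, joinQuartic_eq]
    simp only [vertexQuadratic_eq, Fintype.card_fin, add_assoc, ne_eq, Fin.ext_iff, Fin.val_zero]
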